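/- Let δ₁, δ₂, δ₃ ∈ ℚ[t] be nonzero polynomials with δ_j(0) ≠ 0 for each j. For j = 1, 2, 3 set A_j = ℚ[t^{±1}]/(δ_j) and let η_j ∈ A_j be the class of 1. Let V = (A₁ ⊗_ℚ A₂ ⊗_ℚ A₃)/H, and let R be the quotient of the polynomial ring ℚ[x₁, x₂, x₃] by the ideal generated by x₁x₂x₃ − 1, δ₁(x₁), δ₂(x₂) and δ₃(x₃). Then there is a well-defined ℚ-linear isomorphism R → V sending, for all integers k₁, k₂, k₃ ≥ 0, the class of the monomial x₁^{k₁}x₂^{k₂}x₃^{k₃} to the class of t^{k₁}η₁ ⊗ t^{k₂}η₂ ⊗ t^{k₃}η₃. -/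

import Mathlib

open LaurentPolynomial TensorProduct

set_option synthInstance.maxHeartbeats 1000000
set_option maxHeartbeats 1000000
set_option maxSynthPendingDepth 3
noncomputable section

abbrev LQuot (K : Type) [Field K] (p : LaurentPolynomial K) : Type :=
  LaurentPolynomial K ⧸ Ideal.span {p}

/-- The class of a Laurent polynomial in the quotient by `(p)`. -/
def clsOf (K : Type) [Field K] (p x : LaurentPolynomial K) : LQuot K p :=
  Ideal.Quotient.mk (Ideal.span {p}) x

abbrev Trip (K : Type) [Field K] (p q r : LaurentPolynomial K) : Type :=
  (LQuot K p ⊗[K] LQuot K q) ⊗[K] LQuot K r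

/-- The holonomy subspace: the `K`-span of the elements
`β₁ ⊗ β₂ ⊗ β₃ - tβ₁ ⊗ tβ₂ ⊗ tβ₃`. -/
def holSub (K : Type) [Field K] (p q r : LaurentPolynomial K) :
    Submodule K (Trip K p q r) :=
  Submodule.span K { x | ∃ (a : LQuot K p) (b : LQuot K q) (c : LQuot K r),
    x = (a ⊗ₜ[K] b) ⊗ₜ[K] c -
      (((T 1 : LaurentPolynomial K) • a) ⊗ₜ[K] ((T 1 : LaurentPolynomial K) • b)) ⊗ₜ[K]
        ((T 1 : LaurentPolynomial K) • c) }


def lev {S : Type} [CommRing S] [Algebra ℚ S] (u : Sˣ) : LaurentPolynomial ℚ →ₐ[ℚ] S :=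
  { LaurentPolynomial.eval₂ (algebraMap ℚ S) u with
    commutes' := fun r => LaurentPolynomial.eval₂_C (algebraMap ℚ S) u r }

theorem lev_toLaurent {S : Type} [CommRing S] [Algebra ℚ S] (u : Sˣ) (p : Polynomial ℚ) :
    lev u (Polynomial.toLaurent p) = Polynomial.aeval (u : S) p :=
  LaurentPolynomial.eval₂_toLaurent (algebraMap ℚ S) u p

theorem lev_T {S : Type} [CommRing S] [Algebra ℚ S] (u : Sˣ) :
    lev u (T 1) = (u : S) := by
  rw [← Polynomial.toLaurent_X, lev_toLaurent, Polynomial.aeval_X]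

def qlev {S : Type} [CommRing S] [Algebra ℚ S] (u : Sˣ) (p : Polynomial ℚ)
    (h : Polynomial.aeval (u : S) p = 0) : LQuot ℚ (Polynomial.toLaurent p) →ₐ[ℚ] S :=
  Ideal.Quotient.liftₐ (Ideal.span {Polynomial.toLaurent p}) (lev u) (by
    intro a ha
    have : Ideal.span {Polynomial.toLaurent p} ≤ RingHom.ker (lev u) := by
      rw [Ideal.span_singleton_le_iff_mem, RingHom.mem_ker, lev_toLaurent, h]
    exact this ha)

theorem qlev_T {S : Type} [CommRing S] [Algebra ℚ S] (u : Sˣ) (p : Polynomial ℚ)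
    (h : Polynomial.aeval (u : S) p = 0) :
    qlev u p h (clsOf ℚ (Polynomial.toLaurent p) (T 1)) = (u : S) := lev_T u

theorem laurent_ext {S : Type} [CommRing S] [Algebra ℚ S] (f g : LaurentPolynomial ℚ →ₐ[ℚ] S)
    (h : f (T 1) = g (T 1)) : f = g := by
  have : (f : LaurentPolynomial ℚ →+* S) = g := by
    apply IsLocalization.ringHom_ext (Submonoid.powers (Polynomial.X : Polynomial ℚ))
    apply Polynomial.ringHom_ext
    · intro a
      have e : (algebraMap (Polynomial ℚ) (LaurentPolynomial ℚ)) (Polynomial.C a) =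
          algebraMap ℚ (LaurentPolynomial ℚ) a := by
        simp [LaurentPolynomial.algebraMap_eq_toLaurent]
      simp only [RingHom.comp_apply, e, RingHom.coe_coe, AlgHom.commutes]
    · simpa [LaurentPolynomial.algebraMap_eq_toLaurent] using h
  ext x
  exact congrArg (fun k => k (T x)) this

theorem lquot_ext {S : Type} [CommRing S] [Algebra ℚ S] {p : LaurentPolynomial ℚ}
    (f g : LQuot ℚ p →ₐ[ℚ] S)
    (h : f (clsOf ℚ p (T 1)) = g (clsOf ℚ p (T 1))) : f = g := by
  apply Ideal.Quotient.algHom_ext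
  exact laurent_ext _ _ h

theorem trip_ext {S : Type} [CommRing S] [Algebra ℚ S] {p q r : LaurentPolynomial ℚ}
    (f g : Trip ℚ p q r →ₐ[ℚ] S)
    (h1 : f ((clsOf ℚ p (T 1) ⊗ₜ 1) ⊗ₜ 1) = g ((clsOf ℚ p (T 1) ⊗ₜ 1) ⊗ₜ 1))
    (h2 : f ((1 ⊗ₜ clsOf ℚ q (T 1)) ⊗ₜ 1) = g ((1 ⊗ₜ clsOf ℚ q (T 1)) ⊗ₜ 1))
    (h3 : f (1 ⊗ₜ clsOf ℚ r (T 1)) = g (1 ⊗ₜ clsOf ℚ r (T 1))) : f = g := by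
  apply Algebra.TensorProduct.ext
  · apply Algebra.TensorProduct.ext
    · exact lquot_ext _ _ h1
    · exact lquot_ext _ _ h2
  · exact lquot_ext _ _ h3

/-- The element `t ⊗ t ⊗ t`. -/
def ttt (p q r : LaurentPolynomial ℚ) : Trip ℚ p q r :=
  (clsOf ℚ p (T 1) ⊗ₜ clsOf ℚ q (T 1)) ⊗ₜ clsOf ℚ r (T 1)

theorem smul_cls (p : LaurentPolynomial ℚ) (a : LQuot ℚ p) :
    (T 1 : LaurentPolynomial ℚ) • a = clsOf ℚ p (T 1) * a := by
  rw [Algebra.smul_def]; rfl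

theorem gen_eq (p q r : LaurentPolynomial ℚ) (a : LQuot ℚ p) (b : LQuot ℚ q) (c : LQuot ℚ r) :
    (a ⊗ₜ[ℚ] b) ⊗ₜ[ℚ] c -
      (((T 1 : LaurentPolynomial ℚ) • a) ⊗ₜ[ℚ] ((T 1 : LaurentPolynomial ℚ) • b)) ⊗ₜ[ℚ]
        ((T 1 : LaurentPolynomial ℚ) • c) = -(((a ⊗ₜ[ℚ] b) ⊗ₜ[ℚ] c) * (ttt p q r - 1)) := by
  rw [smul_cls, smul_cls, smul_cls, ttt, mul_sub, Algebra.TensorProduct.tmul_mul_tmul,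
    Algebra.TensorProduct.tmul_mul_tmul, mul_one, mul_comm a, mul_comm b, mul_comm c, neg_sub]

theorem holSub_eq (p q r : LaurentPolynomial ℚ) :
    holSub ℚ p q r = (Ideal.span {ttt p q r - 1}).restrictScalars ℚ := by
  apply le_antisymm
  · apply Submodule.span_le.2
    rintro x ⟨a, b, c, rfl⟩
    rw [gen_eq]
    exact neg_mem (Ideal.mul_mem_left _ _ (Ideal.mem_span_singleton_self _))
  · intro x hx
    obtain ⟨z, rfl⟩ := Ideal.mem_span_singleton'.1 (show x ∈ Ideal.span {ttt p q r - 1} from hx)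
    clear hx
    induction z using TensorProduct.induction_on with
    | zero => rw [zero_mul]; exact zero_mem _
    | add x y hx hy => rw [add_mul]; exact add_mem hx hy
    | tmul ab c =>
      induction ab using TensorProduct.induction_on with
      | zero => rw [TensorProduct.zero_tmul, zero_mul]; exact zero_mem _
      | add x y hx hy => rw [TensorProduct.add_tmul, add_mul]; exact add_mem hx hy
      | tmul a b =>
        rw [← neg_neg (_ * _), ← gen_eq]
        exact neg_mem (Submodule.subset_span ⟨a, b, c, rfl⟩)

theorem aeval_cls (p : Polynomial ℚ) :
    Polynomial.aeval (clsOf ℚ (Polynomial.toLaurent p) (T 1)) p = 0 := by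
  have : clsOf ℚ (Polynomial.toLaurent p) (T 1) =
      Ideal.Quotient.mkₐ ℚ (Ideal.span {Polynomial.toLaurent p})
        (Polynomial.toLaurentAlg Polynomial.X) := by
    simp [clsOf]
  rw [this, Polynomial.aeval_algHom_apply, Polynomial.aeval_algHom_apply, Polynomial.aeval_X_left]
  exact Ideal.Quotient.eq_zero_iff_mem.2 (Ideal.mem_span_singleton_self _)

section
open MvPolynomial

abbrev relI (δ₁ δ₂ δ₃ : Polynomial ℚ) : Ideal (MvPolynomial (Fin 3) ℚ) :=
  Ideal.span
          {(X 0 : MvPolynomial (Fin 3) ℚ) * X 1 * X 2 - 1,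
            Polynomial.aeval (X 0 : MvPolynomial (Fin 3) ℚ) δ₁,
            Polynomial.aeval (X 1 : MvPolynomial (Fin 3) ℚ) δ₂,
            Polynomial.aeval (X 2 : MvPolynomial (Fin 3) ℚ) δ₃}

/-- `MvPolynomial → Trip`, sending the variables to `t` in the three factors. -/
def toTrip (p q r : LaurentPolynomial ℚ) : MvPolynomial (Fin 3) ℚ →ₐ[ℚ] Trip ℚ p q r :=
  MvPolynomial.aeval ![(clsOf ℚ p (T 1) ⊗ₜ 1) ⊗ₜ 1, (1 ⊗ₜ clsOf ℚ q (T 1)) ⊗ₜ 1,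
    1 ⊗ₜ clsOf ℚ r (T 1)]

theorem toTrip_0 (p q r : LaurentPolynomial ℚ) :
    toTrip p q r (X 0) = (clsOf ℚ p (T 1) ⊗ₜ 1) ⊗ₜ 1 := by simp [toTrip]
theorem toTrip_1 (p q r : LaurentPolynomial ℚ) :
    toTrip p q r (X 1) = (1 ⊗ₜ clsOf ℚ q (T 1)) ⊗ₜ 1 := by simp [toTrip]
theorem toTrip_2 (p q r : LaurentPolynomial ℚ) :
    toTrip p q r (X 2) = 1 ⊗ₜ clsOf ℚ r (T 1) := by simp [toTrip]

theorem cls_pow (p : LaurentPolynomial ℚ) (k : ℕ) :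
    clsOf ℚ p (T 1 ^ k) = clsOf ℚ p (T 1) ^ k := map_pow _ _ _

theorem toTrip_mon (p q r : LaurentPolynomial ℚ) (k₁ k₂ k₃ : ℕ) :
    toTrip p q r (X 0 ^ k₁ * X 1 ^ k₂ * X 2 ^ k₃) =
      (clsOf ℚ p (T 1 ^ k₁) ⊗ₜ[ℚ] clsOf ℚ q (T 1 ^ k₂)) ⊗ₜ[ℚ] clsOf ℚ r (T 1 ^ k₃) := by
  rw [map_mul, map_mul, map_pow, map_pow, map_pow, toTrip_0, toTrip_1, toTrip_2]
  simp only [Algebra.TensorProduct.tmul_pow, Algebra.TensorProduct.tmul_mul_tmul, one_pow,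
    mul_one, one_mul, cls_pow, Algebra.TensorProduct.one_def]

theorem toTrip_aeval_0 (δ : Polynomial ℚ) (q r : LaurentPolynomial ℚ) :
    toTrip (Polynomial.toLaurent δ) q r (Polynomial.aeval (X 0) δ) = 0 := by
  rw [← Polynomial.aeval_algHom_apply, toTrip_0]
  have := Polynomial.aeval_algHom_apply
    ((Algebra.TensorProduct.includeLeft : (LQuot ℚ (Polynomial.toLaurent δ) ⊗[ℚ] LQuot ℚ q) →ₐ[ℚ]
      Trip ℚ (Polynomial.toLaurent δ) q r).comp Algebra.TensorProduct.includeLeft)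
    (clsOf ℚ (Polynomial.toLaurent δ) (T 1)) δ
  rw [aeval_cls, map_zero] at this
  exact this

theorem toTrip_aeval_1 (δ : Polynomial ℚ) (p r : LaurentPolynomial ℚ) :
    toTrip p (Polynomial.toLaurent δ) r (Polynomial.aeval (X 1) δ) = 0 := by
  rw [← Polynomial.aeval_algHom_apply, toTrip_1]
  have := Polynomial.aeval_algHom_apply
    ((Algebra.TensorProduct.includeLeft : (LQuot ℚ p ⊗[ℚ] LQuot ℚ (Polynomial.toLaurent δ)) →ₐ[ℚ]
      Trip ℚ p (Polynomial.toLaurent δ) r).comp Algebra.TensorProduct.includeRight)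
    (clsOf ℚ (Polynomial.toLaurent δ) (T 1)) δ
  rw [aeval_cls, map_zero] at this
  exact this

theorem toTrip_aeval_2 (δ : Polynomial ℚ) (p q : LaurentPolynomial ℚ) :
    toTrip p q (Polynomial.toLaurent δ) (Polynomial.aeval (X 2) δ) = 0 := by
  rw [← Polynomial.aeval_algHom_apply, toTrip_2]
  have := Polynomial.aeval_algHom_apply
    (Algebra.TensorProduct.includeRight : LQuot ℚ (Polynomial.toLaurent δ) →ₐ[ℚ]
      Trip ℚ p q (Polynomial.toLaurent δ))
    (clsOf ℚ (Polynomial.toLaurent δ) (T 1)) δ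
  rw [aeval_cls, map_zero] at this
  exact this

variable (δ₁ δ₂ δ₃ : Polynomial ℚ)

abbrev TripD : Type :=
  Trip ℚ (Polynomial.toLaurent δ₁) (Polynomial.toLaurent δ₂) (Polynomial.toLaurent δ₃)

abbrev holI : Ideal (TripD δ₁ δ₂ δ₃) :=
  Ideal.span {ttt (Polynomial.toLaurent δ₁) (Polynomial.toLaurent δ₂)
    (Polynomial.toLaurent δ₃) - 1}

abbrev RelR : Type := MvPolynomial (Fin 3) ℚ ⧸ relI δ₁ δ₂ δ₃

def fwd : RelR δ₁ δ₂ δ₃ →ₐ[ℚ] (TripD δ₁ δ₂ δ₃ ⧸ holI δ₁ δ₂ δ₃) :=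
  Ideal.Quotient.liftₐ (relI δ₁ δ₂ δ₃)
    ((Ideal.Quotient.mkₐ ℚ (holI δ₁ δ₂ δ₃)).comp (toTrip _ _ _)) (by
    intro a ha
    have : relI δ₁ δ₂ δ₃ ≤ RingHom.ker ((Ideal.Quotient.mkₐ ℚ (holI δ₁ δ₂ δ₃)).comp
        (toTrip _ _ _)) := by
      apply Ideal.span_le.2
      rintro x (rfl | rfl | rfl | rfl)
      · apply Ideal.Quotient.eq_zero_iff_mem.2
        have h := toTrip_mon (Polynomial.toLaurent δ₁) (Polynomial.toLaurent δ₂)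
          (Polynomial.toLaurent δ₃) 1 1 1
        simp only [pow_one] at h
        change toTrip _ _ _ (_ - 1) ∈ _
        rw [map_sub, h, map_one]
        exact Ideal.mem_span_singleton_self _
      · change Ideal.Quotient.mkₐ ℚ (holI δ₁ δ₂ δ₃) (toTrip _ _ _ _) = 0
        rw [toTrip_aeval_0, map_zero]
      · change Ideal.Quotient.mkₐ ℚ (holI δ₁ δ₂ δ₃) (toTrip _ _ _ _) = 0
        rw [toTrip_aeval_1, map_zero]
      · change Ideal.Quotient.mkₐ ℚ (holI δ₁ δ₂ δ₃) (toTrip _ _ _ _) = 0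
        rw [toTrip_aeval_2, map_zero]
    exact this ha)

/-- The class of a variable. -/
def xc (i : Fin 3) : RelR δ₁ δ₂ δ₃ := Ideal.Quotient.mkₐ ℚ _ (X i)

theorem xc_prod : xc δ₁ δ₂ δ₃ 0 * xc δ₁ δ₂ δ₃ 1 * xc δ₁ δ₂ δ₃ 2 = 1 := by
  rw [xc, xc, xc, ← map_mul, ← map_mul, ← map_one (Ideal.Quotient.mkₐ ℚ _)]
  apply Ideal.Quotient.eq.2
  exact Ideal.subset_span (by simp)

def xu0 : (RelR δ₁ δ₂ δ₃)ˣ :=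
  Units.mkOfMulEqOne (xc δ₁ δ₂ δ₃ 0) (xc δ₁ δ₂ δ₃ 1 * xc δ₁ δ₂ δ₃ 2)
    (by rw [← mul_assoc, xc_prod])
def xu1 : (RelR δ₁ δ₂ δ₃)ˣ :=
  Units.mkOfMulEqOne (xc δ₁ δ₂ δ₃ 1) (xc δ₁ δ₂ δ₃ 0 * xc δ₁ δ₂ δ₃ 2)
    (by rw [← xc_prod δ₁ δ₂ δ₃]; ring)
def xu2 : (RelR δ₁ δ₂ δ₃)ˣ :=
  Units.mkOfMulEqOne (xc δ₁ δ₂ δ₃ 2) (xc δ₁ δ₂ δ₃ 0 * xc δ₁ δ₂ δ₃ 1)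
    (by rw [← xc_prod δ₁ δ₂ δ₃]; ring)

theorem xc_aeval (i : Fin 3) (δ : Polynomial ℚ)
    (h : Polynomial.aeval (X i : MvPolynomial (Fin 3) ℚ) δ ∈ relI δ₁ δ₂ δ₃) :
    Polynomial.aeval (xc δ₁ δ₂ δ₃ i) δ = 0 := by
  rw [xc, Polynomial.aeval_algHom_apply]
  exact Ideal.Quotient.eq_zero_iff_mem.2 h

theorem xu0_aeval : Polynomial.aeval (xu0 δ₁ δ₂ δ₃ : RelR δ₁ δ₂ δ₃) δ₁ = 0 :=
  xc_aeval _ _ _ 0 _ (Ideal.subset_span (by simp))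

theorem xu1_aeval : Polynomial.aeval (xu1 δ₁ δ₂ δ₃ : RelR δ₁ δ₂ δ₃) δ₂ = 0 :=
  xc_aeval _ _ _ 1 _ (Ideal.subset_span (by simp))

theorem xu2_aeval : Polynomial.aeval (xu2 δ₁ δ₂ δ₃ : RelR δ₁ δ₂ δ₃) δ₃ = 0 :=
  xc_aeval _ _ _ 2 _ (Ideal.subset_span (by simp))

def bwd0 : TripD δ₁ δ₂ δ₃ →ₐ[ℚ] RelR δ₁ δ₂ δ₃ :=
  Algebra.TensorProduct.productMap
    (Algebra.TensorProduct.productMap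
      (qlev (xu0 δ₁ δ₂ δ₃) δ₁ (xu0_aeval _ _ _))
      (qlev (xu1 δ₁ δ₂ δ₃) δ₂ (xu1_aeval _ _ _)))
    (qlev (xu2 δ₁ δ₂ δ₃) δ₃ (xu2_aeval _ _ _))

theorem bwd0_0 : bwd0 δ₁ δ₂ δ₃ ((clsOf ℚ _ (T 1) ⊗ₜ 1) ⊗ₜ 1) = xc δ₁ δ₂ δ₃ 0 := by
  rw [bwd0, Algebra.TensorProduct.productMap_apply_tmul,
    Algebra.TensorProduct.productMap_apply_tmul, qlev_T, map_one, map_one, mul_one, mul_one]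
  rfl
theorem bwd0_1 : bwd0 δ₁ δ₂ δ₃ ((1 ⊗ₜ clsOf ℚ _ (T 1)) ⊗ₜ 1) = xc δ₁ δ₂ δ₃ 1 := by
  rw [bwd0, Algebra.TensorProduct.productMap_apply_tmul,
    Algebra.TensorProduct.productMap_apply_tmul, qlev_T, map_one, map_one, one_mul, mul_one]
  rfl
theorem bwd0_2 : bwd0 δ₁ δ₂ δ₃ (1 ⊗ₜ clsOf ℚ _ (T 1)) = xc δ₁ δ₂ δ₃ 2 := by
  rw [bwd0, Algebra.TensorProduct.productMap_apply_tmul, qlev_T, map_one, one_mul]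
  rfl
theorem bwd0_ttt : bwd0 δ₁ δ₂ δ₃ (ttt _ _ _) = 1 := by
  rw [bwd0, ttt, Algebra.TensorProduct.productMap_apply_tmul,
    Algebra.TensorProduct.productMap_apply_tmul, qlev_T, qlev_T, qlev_T]
  exact xc_prod δ₁ δ₂ δ₃

def bwd : (TripD δ₁ δ₂ δ₃ ⧸ holI δ₁ δ₂ δ₃) →ₐ[ℚ] RelR δ₁ δ₂ δ₃ :=
  Ideal.Quotient.liftₐ (holI δ₁ δ₂ δ₃) (bwd0 δ₁ δ₂ δ₃) (by
    intro a ha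
    have : holI δ₁ δ₂ δ₃ ≤ RingHom.ker (bwd0 δ₁ δ₂ δ₃) := by
      rw [Ideal.span_singleton_le_iff_mem, RingHom.mem_ker, map_sub, bwd0_ttt, map_one, sub_self]
    exact this ha)

theorem fwd_xc (i : Fin 3) : fwd δ₁ δ₂ δ₃ (xc δ₁ δ₂ δ₃ i) =
    Ideal.Quotient.mkₐ ℚ _ (toTrip _ _ _ (X i)) := rfl

theorem bwd_mk (x : TripD δ₁ δ₂ δ₃) : bwd δ₁ δ₂ δ₃ (Ideal.Quotient.mkₐ ℚ _ x) =
    bwd0 δ₁ δ₂ δ₃ x := rfl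

theorem fwd_bwd : (fwd δ₁ δ₂ δ₃).comp (bwd δ₁ δ₂ δ₃) = AlgHom.id ℚ _ := by
  apply Ideal.Quotient.algHom_ext
  refine trip_ext (S := TripD δ₁ δ₂ δ₃ ⧸ holI δ₁ δ₂ δ₃) (p := Polynomial.toLaurent δ₁)
    (q := Polynomial.toLaurent δ₂) (r := Polynomial.toLaurent δ₃) _ _ ?_ ?_ ?_
  · exact (congrArg (fwd δ₁ δ₂ δ₃) (bwd0_0 δ₁ δ₂ δ₃)).trans ((fwd_xc δ₁ δ₂ δ₃ 0).trans
      (congrArg (Ideal.Quotient.mkₐ ℚ (holI δ₁ δ₂ δ₃)) (toTrip_0 _ _ _)))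
  · exact (congrArg (fwd δ₁ δ₂ δ₃) (bwd0_1 δ₁ δ₂ δ₃)).trans ((fwd_xc δ₁ δ₂ δ₃ 1).trans
      (congrArg (Ideal.Quotient.mkₐ ℚ (holI δ₁ δ₂ δ₃)) (toTrip_1 _ _ _)))
  · exact (congrArg (fwd δ₁ δ₂ δ₃) (bwd0_2 δ₁ δ₂ δ₃)).trans ((fwd_xc δ₁ δ₂ δ₃ 2).trans
      (congrArg (Ideal.Quotient.mkₐ ℚ (holI δ₁ δ₂ δ₃)) (toTrip_2 _ _ _)))

theorem bwd_fwd : (bwd δ₁ δ₂ δ₃).comp (fwd δ₁ δ₂ δ₃) = AlgHom.id ℚ _ := by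
  apply Ideal.Quotient.algHom_ext
  apply MvPolynomial.algHom_ext
  intro i
  change bwd δ₁ δ₂ δ₃ (fwd δ₁ δ₂ δ₃ (xc δ₁ δ₂ δ₃ i)) = xc δ₁ δ₂ δ₃ i
  rw [fwd_xc, bwd_mk]
  fin_cases i
  · exact (congrArg _ (toTrip_0 _ _ _)).trans (bwd0_0 _ _ _)
  · exact (congrArg _ (toTrip_1 _ _ _)).trans (bwd0_1 _ _ _)
  · exact (congrArg _ (toTrip_2 _ _ _)).trans (bwd0_2 _ _ _)

end

open MvPolynomial in
theorem stmt13 (δ₁ δ₂ δ₃ : Polynomial ℚ) (h₁ : δ₁ ≠ 0) (h₂ : δ₂ ≠ 0) (h₃ : δ₃ ≠ 0)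
    (h0₁ : δ₁.eval 0 ≠ 0) (h0₂ : δ₂.eval 0 ≠ 0) (h0₃ : δ₃.eval 0 ≠ 0) :
    ∃ e : (MvPolynomial (Fin 3) ℚ ⧸ Ideal.span
          {(X 0 : MvPolynomial (Fin 3) ℚ) * X 1 * X 2 - 1,
            Polynomial.aeval (X 0 : MvPolynomial (Fin 3) ℚ) δ₁,
            Polynomial.aeval (X 1 : MvPolynomial (Fin 3) ℚ) δ₂,
            Polynomial.aeval (X 2 : MvPolynomial (Fin 3) ℚ) δ₃}) ≃ₗ[ℚ]
        (Trip ℚ (Polynomial.toLaurent δ₁) (Polynomial.toLaurent δ₂)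
            (Polynomial.toLaurent δ₃) ⧸
          holSub ℚ (Polynomial.toLaurent δ₁) (Polynomial.toLaurent δ₂)
            (Polynomial.toLaurent δ₃)),
      ∀ k₁ k₂ k₃ : ℕ,
        e (Ideal.Quotient.mk _ ((X 0 : MvPolynomial (Fin 3) ℚ) ^ k₁ * X 1 ^ k₂ * X 2 ^ k₃)) =
          Submodule.Quotient.mk
            ((clsOf ℚ (Polynomial.toLaurent δ₁) (T 1 ^ k₁) ⊗ₜ[ℚ]
                clsOf ℚ (Polynomial.toLaurent δ₂) (T 1 ^ k₂)) ⊗ₜ[ℚ]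
              clsOf ℚ (Polynomial.toLaurent δ₃) (T 1 ^ k₃)) := by
  refine ⟨(AlgEquiv.ofAlgHom (fwd δ₁ δ₂ δ₃) (bwd δ₁ δ₂ δ₃) (fwd_bwd _ _ _)
    (bwd_fwd _ _ _)).toLinearEquiv ≪≫ₗ
    (Submodule.Quotient.restrictScalarsEquiv ℚ (holI δ₁ δ₂ δ₃)).symm ≪≫ₗ
    Submodule.quotEquivOfEq _ _ (holSub_eq _ _ _).symm, ?_⟩
  intro k₁ k₂ k₃
  rw [← toTrip_mon]
  rfl
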